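/- Let p be a prime and n a positive integer with p ∤ n, and let Cₙ be the cyclic group of order n. Then ℤ_(p)Cₙ is semiperfect if and only if for each divisor d of n the multiplicative order of p in (ℤ/dℤ)ˣ equals φ(d), Euler's totient of d (i.e., p is a primitive root modulo d for each d | n). -/

import Mathlib

/-- The Jacobson radical of a (possibly noncommutative) ring, as a two-sided ideal:
the intersection of all maximal left ideals. -/
def ringJacobson (R : Type*) [Ring R] : TwoSidedIdeal R :=
  TwoSidedIdeal.jacobson ⊥

/-- A ring `R` is *semiperfect* if `R / J(R)` is a semisimple (artinian) ring and every
idempotent of `R / J(R)` can be lifted to an idempotent of `R`. -/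
def IsSemiperfectRing (R : Type*) [Ring R] : Prop :=
  IsSemisimpleRing (ringJacobson R).ringCon.Quotient ∧
  ∀ x : (ringJacobson R).ringCon.Quotient, IsIdempotentElem x →
    ∃ e : R, IsIdempotentElem e ∧ (ringJacobson R).ringCon.mk' e = x

instance int_span_prime_isPrime (p : ℕ) [hp : Fact p.Prime] :
    (Ideal.span {(p : ℤ)}).IsPrime :=
  (Ideal.span_singleton_prime (by exact_mod_cast hp.out.ne_zero)).mpr
    (Int.prime_iff_natAbs_prime.mpr (by simpa using hp.out))

/-- The localisation `ℤ_(p)` of the integers at the prime `p`. -/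
abbrev ZLoc (p : ℕ) [Fact p.Prime] : Type :=
  Localization.AtPrime (Ideal.span {(p : ℤ)})

/-!
If the local ring `A` has residue field `k` and `n` is invertible in `A`, then `X ^ n - 1` is
separable over `A`, so `k[X]/(X ^ n - 1)` is semisimple and is the quotient of
`A[Cₙ] ≃ A[X]/(X ^ n - 1)` by its Jacobson radical. Thus `A[Cₙ]` is semiperfect exactly when
idempotents lift along this reduction. An idempotent modulo a product of pairwise coprime primes is
a choice of `0` or `1` modulo each factor. Over `ℤ_(p)` these factors are the cyclotomic polynomials
`Φ_d` with `d ∣ n`, over `k` they are the irreducible factors of the `Φ_d`, so lifting means that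
every `Φ_d` stays irreducible over `k`. For a finite field with `q` elements this holds iff `q` has
order `φ(d)` modulo `d`.
-/

open Polynomial IsLocalRing

section Semiperfect

variable {R S : Type*} [Ring R] [Ring S]

/-- Every idempotent of the codomain of `f` is the image of an idempotent of the domain; when `f`
is reduction modulo the Jacobson radical this is the lifting condition in `IsSemiperfectRing`. -/
def LiftsIdempotents (f : R →+* S) : Prop :=
  ∀ x : S, IsIdempotentElem x → ∃ e : R, IsIdempotentElem e ∧ f e = x

lemma mem_ringJacobson {x : R} : x ∈ ringJacobson R ↔ x ∈ Ring.jacobson R := by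
  rw [ringJacobson, ← TwoSidedIdeal.mem_asIdeal, TwoSidedIdeal.asIdeal_jacobson,
    TwoSidedIdeal.bot_asIdeal, Ideal.jacobson_bot]

lemma ker_mk'_ringJacobson : RingHom.ker (ringJacobson R).ringCon.mk' = Ring.jacobson R := by
  ext x
  rw [RingHom.mem_ker, ← mem_ringJacobson, TwoSidedIdeal.mem_iff,
    ← map_zero (ringJacobson R).ringCon.mk']
  exact RingCon.eq _

lemma ringCon_ringJacobson_eq_ker {f : R →+* S} (hker : RingHom.ker f = Ring.jacobson R) :
    (ringJacobson R).ringCon = RingCon.ker f := by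
  ext x y
  rw [RingCon.ker_apply, TwoSidedIdeal.rel_iff, mem_ringJacobson, ← hker, RingHom.mem_ker,
    map_sub, sub_eq_zero]

theorem isSemiperfectRing_iff_of_ker_eq_jacobson {f : R →+* S} (hf : Function.Surjective f)
    (hker : RingHom.ker f = Ring.jacobson R) :
    IsSemiperfectRing R ↔ IsSemisimpleRing S ∧ LiftsIdempotents f := by
  have hcon := ringCon_ringJacobson_eq_ker hker
  let E : (ringJacobson R).ringCon.Quotient ≃+* S :=
    RingEquiv.ofBijective ((ringJacobson R).ringCon.lift f hcon.le)
      ⟨RingCon.lift_injective_iff.mpr hcon, RingCon.lift_surjective_of_surjective _ hf⟩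
  have hE (e : R) : E ((ringJacobson R).ringCon.mk' e) = f e := rfl
  refine and_congr ⟨fun _ ↦ E.isSemisimpleRing, fun _ ↦ E.symm.isSemisimpleRing⟩
    ⟨fun h x hx ↦ ?_, fun h x hx ↦ ?_⟩
  · obtain ⟨e, he, hex⟩ := h (E.symm x) (hx.map E.symm)
    exact ⟨e, he, by rw [← hE, hex, E.apply_symm_apply]⟩
  · obtain ⟨e, he, hex⟩ := h (E x) (hx.map E)
    exact ⟨e, he, E.injective (by rw [hE, hex])⟩

theorem isSemiperfectRing_congr (e : R ≃+* S) : IsSemiperfectRing R ↔ IsSemiperfectRing S := by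
  let π : R →+* (ringJacobson S).ringCon.Quotient := (ringJacobson S).ringCon.mk'.comp e.toRingHom
  have : RingHomSurjective e.toRingHom := ⟨e.surjective⟩
  have hπ : Function.Surjective π := (RingCon.mk'_surjective _).comp e.surjective
  have hker : RingHom.ker π = Ring.jacobson R := by
    rw [← RingHom.comap_ker, ker_mk'_ringJacobson]
    exact Module.comap_jacobson_of_bijective (f := e.toRingHom.toSemilinearMap) e.bijective
  rw [isSemiperfectRing_iff_of_ker_eq_jacobson hπ hker]
  exact and_congr_right' (forall₂_congr fun x _ ↦
    ⟨fun ⟨a, ha, hax⟩ ↦ ⟨e a, ha.map e, hax⟩,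
      fun ⟨b, hb, hbx⟩ ↦ ⟨e.symm b, hb.map e.symm, by simpa [π] using hbx⟩⟩)

lemma ker_eq_jacobson_of_le [IsSemisimpleRing S] {f : R →+* S} (hf : Function.Surjective f)
    (hker : RingHom.ker f ≤ Ring.jacobson R) : RingHom.ker f = Ring.jacobson R := by
  have : RingHomSurjective f := ⟨hf⟩
  refine hker.antisymm ((Ring.le_comap_jacobson f).trans_eq ?_)
  rw [IsSemisimpleRing.jacobson_eq_bot, RingHom.ker]

end Semiperfect

lemma map_maximalIdeal_le_jacobson {A R : Type*} [CommRing A] [IsLocalRing A] [CommRing R]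
    [Algebra A R] [Algebra.IsIntegral A R] :
    (maximalIdeal A).map (algebraMap A R) ≤ Ring.jacobson R := by
  rw [Ring.jacobson_eq_sInf_isMaximal]
  refine le_sInf fun M (_ : M.IsMaximal) ↦ Ideal.map_le_iff_le_comap.mpr ?_
  exact (eq_maximalIdeal (Ideal.isMaximal_comap_of_isIntegral_of_isMaximal (R := A) M)).ge

section Coprime

variable {R ι : Type*} [CommRing R]

lemma isUnit_of_dvd_of_dvd_sub_one {a g : R} (h : a ∣ g) (h' : a ∣ g - 1) : IsUnit a :=
  isUnit_of_dvd_one (by simpa using dvd_sub h h')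

lemma isUnit_or_isUnit_of_dvd_sub {a b u e : R} (hb : b ∣ u * a - 1) (hsub : a * b ∣ e - u * a)
    (he : a * b ∣ e ∨ a * b ∣ e - 1) : IsUnit a ∨ IsUnit b := by
  rcases he with he | he
  · have hb' : b ∣ u * a := dvd_of_mul_left_dvd ((dvd_iff_dvd_of_dvd_sub hsub).mp he)
    exact .inr (isUnit_of_dvd_of_dvd_sub_one hb' hb)
  · have ha : a ∣ e :=
      (dvd_iff_dvd_of_dvd_sub (dvd_of_mul_right_dvd hsub)).mpr (dvd_mul_left a u)
    exact .inl (isUnit_of_dvd_of_dvd_sub_one ha (dvd_of_mul_right_dvd he))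

lemma exists_forall_dvd_sub_of_pairwise_isCoprime [Finite ι] {f : ι → R}
    (hcop : Pairwise (Function.onFun IsCoprime f)) (a : ι → R) : ∃ r, ∀ i, f i ∣ r - a i := by
  simp_rw [← Ideal.mem_span_singleton]
  exact Ideal.exists_forall_sub_mem_ideal
    (fun i j hij ↦ (Ideal.isCoprime_span_singleton_iff _ _).mpr (hcop hij)) a

lemma pairwise_isCoprime_of_separable_prod [Fintype ι] {f : ι → R[X]}
    (hf : (∏ i, f i).Separable) : Pairwise (Function.onFun IsCoprime f) := by
  classical
  intro i j hij
  refine (hf.of_dvd ?_).isCoprime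
  rw [← Finset.prod_pair hij]
  exact Finset.prod_dvd_prod_of_subset _ _ _ (Finset.subset_univ _)

lemma not_isUnit_map_of_monic {S : Type*} [CommRing S] [Nontrivial S] (φ : R →+* S) {f : R[X]}
    (hmonic : f.Monic) (hf : ¬IsUnit f) : ¬IsUnit (f.map φ) := by
  rwa [(hmonic.map φ).isUnit_iff, ← (hmonic.map φ).natDegree_eq_zero, hmonic.natDegree_map,
    hmonic.natDegree_eq_zero, ← hmonic.isUnit_iff]

end Coprime

lemma isIdempotentElem_adjoinRoot_mk_iff {R : Type*} [CommRing R] {f g : R[X]} :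
    IsIdempotentElem (AdjoinRoot.mk f g) ↔ f ∣ g * (g - 1) := by
  rw [IsIdempotentElem, ← map_mul, AdjoinRoot.mk_eq_mk, mul_sub_one]

lemma isSemisimpleRing_adjoinRoot {K : Type*} [Field K] {f : K[X]} (hf : Squarefree f) :
    IsSemisimpleRing (AdjoinRoot f) := by
  have : Module.Finite K (AdjoinRoot f) := (AdjoinRoot.powerBasis hf.ne_zero).finite
  have : IsArtinianRing (AdjoinRoot f) := .of_finite K _
  have : IsReduced (AdjoinRoot f) := (Ideal.isRadical_iff_quotient_reduced _).mp
    (isRadical_iff_span_singleton.mp hf.isRadical)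
  exact IsArtinianRing.isSemisimpleRing_of_isReduced _

section Reduction

variable {A B : Type*} [CommRing A] [CommRing B] {φ : A →+* B}

variable (φ) in
/-- The map `A[X]/(f) → B[X]/(f.map φ)` induced by `φ : A →+* B`; for `A` local and `B` its residue
field it is reduction modulo the maximal ideal of `A`. -/
noncomputable def adjoinRootMap (f : A[X]) : AdjoinRoot f →+* AdjoinRoot (f.map φ) :=
  AdjoinRoot.map φ f (f.map φ) dvd_rfl

lemma adjoinRootMap_mk (f g : A[X]) :
    adjoinRootMap φ f (AdjoinRoot.mk f g) = AdjoinRoot.mk _ (g.map φ) := by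
  rw [adjoinRootMap, AdjoinRoot.map, AdjoinRoot.lift_mk, ← eval₂_map,
    ← AdjoinRoot.algebraMap_eq, ← aeval_def, AdjoinRoot.aeval_eq]

lemma adjoinRootMap_surjective (hφ : Function.Surjective φ) (f : A[X]) :
    Function.Surjective (adjoinRootMap φ f) := by
  intro x
  obtain ⟨g, rfl⟩ := AdjoinRoot.mk_surjective x
  obtain ⟨g, rfl⟩ := map_surjective φ hφ g
  exact ⟨AdjoinRoot.mk f g, adjoinRootMap_mk f g⟩

lemma ker_adjoinRootMap_le (hφ : Function.Surjective φ) (f : A[X]) :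
    RingHom.ker (adjoinRootMap φ f) ≤ (RingHom.ker φ).map (algebraMap A (AdjoinRoot f)) := by
  intro x hx
  obtain ⟨g, rfl⟩ := AdjoinRoot.mk_surjective x
  rw [RingHom.mem_ker, adjoinRootMap_mk, AdjoinRoot.mk_eq_zero] at hx
  obtain ⟨c, hc⟩ := hx
  obtain ⟨c, rfl⟩ := map_surjective φ hφ c
  have hsub : g - f * c ∈ (RingHom.ker φ).map C := by
    rw [← ker_mapRingHom, RingHom.mem_ker, coe_mapRingHom, Polynomial.map_sub,
      Polynomial.map_mul, hc, sub_self]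
  have hmk : AdjoinRoot.mk f (g - f * c) = AdjoinRoot.mk f g := by
    rw [map_sub, map_mul, AdjoinRoot.mk_self, zero_mul, sub_zero]
  rw [← hmk, AdjoinRoot.algebraMap_eq, AdjoinRoot.of, ← Ideal.map_map]
  exact Ideal.mem_map_of_mem _ hsub

lemma liftsIdempotents_adjoinRootMap_iff {f : A[X]} :
    LiftsIdempotents (adjoinRootMap φ f) ↔
      ∀ g : B[X], f.map φ ∣ g * (g - 1) →
        ∃ e : A[X], f ∣ e * (e - 1) ∧ f.map φ ∣ e.map φ - g := by
  simp only [LiftsIdempotents, AdjoinRoot.mk_surjective.forall, AdjoinRoot.mk_surjective.exists,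
    isIdempotentElem_adjoinRoot_mk_iff, adjoinRootMap_mk, AdjoinRoot.mk_eq_mk]

theorem liftsIdempotents_adjoinRootMap_prod {ι : Type*} [Fintype ι] {f : ι → A[X]}
    (hcop : Pairwise (Function.onFun IsCoprime f)) (hprime : ∀ i, Prime ((f i).map φ)) :
    LiftsIdempotents (adjoinRootMap φ (∏ i, f i)) := by
  rw [liftsIdempotents_adjoinRootMap_iff, Polynomial.map_prod]
  intro g hg
  have exists_local_lift (i : ι) :
      ∃ ε : A[X], ε * (ε - 1) = 0 ∧ (f i).map φ ∣ ε.map φ - g := by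
    have hi : (f i).map φ ∣ g * (g - 1) :=
      (Finset.dvd_prod_of_mem (fun i ↦ (f i).map φ) (Finset.mem_univ i)).trans hg
    rcases (hprime i).dvd_or_dvd hi with h | h
    · exact ⟨0, by simp, by simpa using h⟩
    · exact ⟨1, by simp, by simpa [dvd_sub_comm] using h⟩
  choose ε hε hεg using exists_local_lift
  obtain ⟨e, he⟩ := exists_forall_dvd_sub_of_pairwise_isCoprime hcop ε
  refine ⟨e, Fintype.prod_dvd_of_coprime hcop fun i ↦ ?_,
    Fintype.prod_dvd_of_coprime (fun i j hij ↦ (hcop hij).map (mapRingHom φ)) fun i ↦ ?_⟩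
  · obtain ⟨c, hc⟩ := he i
    exact ⟨c * (e + ε i - 1), by linear_combination (e + ε i - 1) * hc + hε i⟩
  · have hred := Polynomial.map_dvd φ (he i)
    rw [Polynomial.map_sub] at hred
    simpa using dvd_add hred (hεg i)

theorem irreducible_map_of_liftsIdempotents [Nontrivial B] {f q : A[X]}
    (hlift : LiftsIdempotents (adjoinRootMap φ f)) (hsep : (f.map φ).Separable)
    (hmonic : q.Monic) (hq : Prime q) (hqf : q ∣ f) : Irreducible (q.map φ) := by
  refine irreducible_iff.mpr
    ⟨not_isUnit_map_of_monic _ hmonic hq.not_isUnit, fun a b hab ↦ ?_⟩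
  obtain ⟨c, rfl⟩ := hqf
  rw [liftsIdempotents_adjoinRootMap_iff, Polynomial.map_mul, hab] at hlift
  rw [Polynomial.map_mul, hab, mul_assoc] at hsep
  -- `u * a` is `0` modulo `a` and `1` modulo `b`; a lift of it is `0` or `1` modulo the prime `q`.
  obtain ⟨u, v, huv⟩ := hsep.isCoprime
  have hbc : b * c.map φ ∣ u * a - 1 := ⟨-v, by linear_combination huv⟩
  obtain ⟨e, he, heg⟩ := hlift (u * a) (by
    rw [mul_assoc]; exact mul_dvd_mul (dvd_mul_left a u) hbc)
  refine isUnit_or_isUnit_of_dvd_sub (dvd_of_mul_right_dvd hbc) (dvd_of_mul_right_dvd heg) ?_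
  rw [← hab]
  refine (hq.dvd_or_dvd (dvd_of_mul_right_dvd he)).imp (Polynomial.map_dvd φ) fun h ↦ ?_
  rw [← Polynomial.map_one φ, ← Polynomial.map_sub]
  exact Polynomial.map_dvd φ h

end Reduction

section LocalReduction

variable {A K : Type*} [CommRing A] [IsLocalRing A] [Field K] {φ : A →+* K}

theorem isSemiperfectRing_adjoinRoot_iff_liftsIdempotents (hφ : Function.Surjective φ)
    {f : A[X]} (hmonic : f.Monic) (hf : Squarefree (f.map φ)) :
    IsSemiperfectRing (AdjoinRoot f) ↔ LiftsIdempotents (adjoinRootMap φ f) := by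
  have : Module.Finite A (AdjoinRoot f) := hmonic.finite_adjoinRoot
  have hsemisimple := isSemisimpleRing_adjoinRoot hf
  have hker_le := ker_adjoinRootMap_le hφ f
  rw [eq_maximalIdeal (RingHom.ker_isMaximal_of_surjective φ hφ)] at hker_le
  have hker := ker_eq_jacobson_of_le (adjoinRootMap_surjective hφ f)
    (hker_le.trans map_maximalIdeal_le_jacobson)
  rw [isSemiperfectRing_iff_of_ker_eq_jacobson (adjoinRootMap_surjective hφ f) hker,
    and_iff_right hsemisimple]

theorem isSemiperfectRing_adjoinRoot_prod_iff (hφ : Function.Surjective φ)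
    {ι : Type*} [Fintype ι] {f : ι → A[X]} (hmonic : ∀ i, (f i).Monic)
    (hprime : ∀ i, Prime (f i)) (hsep : (∏ i, f i).Separable) :
    IsSemiperfectRing (AdjoinRoot (∏ i, f i)) ↔ ∀ i, Irreducible ((f i).map φ) := by
  have hsep_map : ((∏ i, f i).map φ).Separable := hsep.map
  rw [isSemiperfectRing_adjoinRoot_iff_liftsIdempotents hφ
    (monic_prod_of_monic _ _ fun i _ ↦ hmonic i) hsep_map.squarefree]
  refine ⟨fun hlift i ↦ ?_, fun hirr ↦ ?_⟩
  · exact irreducible_map_of_liftsIdempotents hlift hsep_map (hmonic i) (hprime i)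
      (Finset.dvd_prod_of_mem f (Finset.mem_univ i))
  · exact liftsIdempotents_adjoinRootMap_prod (pairwise_isCoprime_of_separable_prod hsep)
      fun i ↦ (hirr i).prime

end LocalReduction

section Cyclotomic

theorem irreducible_cyclotomic_iff_orderOf_card {K : Type*} [Field K] [Finite K] {d : ℕ}
    (hd : (d : K) ≠ 0) :
    Irreducible (cyclotomic d K) ↔ orderOf (Nat.card K : ZMod d) = d.totient := by
  have := Fintype.ofFinite K
  obtain ⟨p, _, f, hp, hcard⟩ := FiniteField.card' K
  have : Fact p.Prime := ⟨hp⟩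
  have hcop : p.Coprime d :=
    hp.coprime_iff_not_dvd.mpr fun h ↦ hd ((CharP.cast_eq_zero_iff K p d).mpr h)
  have horder : orderOf (Nat.card K : ZMod d) =
      orderOf (ZMod.unitOfCoprime _ (hcop.pow_left f)) := by
    rw [← orderOf_units, ZMod.coe_unitOfCoprime, Nat.card_eq_fintype_card, hcard]
  rw [horder, ← natDegree_cyclotomic d K, eq_comm]
  exact ⟨natDegree_of_dvd_cyclotomic_of_irreducible hcard hcop dvd_rfl,
    irreducible_of_dvd_cyclotomic_of_natDegree hcard hcop dvd_rfl⟩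

theorem prime_map_of_isLocalization {R A : Type*} [CommRing R] [CommRing A] [Nontrivial A]
    [Algebra R A] (M : Submonoid R) [IsLocalization M A] {f : R[X]} (hmonic : f.Monic)
    (hf : Prime f) : Prime (f.map (algebraMap R A)) := by
  let := Polynomial.algebra R A
  have := Polynomial.isLocalization M A
  have hdisj : Disjoint (M.map C : Set R[X]) (Ideal.span {f}) := by
    rw [Set.disjoint_left]
    rintro _ ⟨m, hm, rfl⟩ hmf
    have hunit : IsUnit ((C m).map (algebraMap R A)) := by
      simpa using (IsLocalization.map_units A (⟨m, hm⟩ : M)).map C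
    exact not_isUnit_map_of_monic (algebraMap R A) hmonic hf.not_isUnit
      (isUnit_of_dvd_unit (Polynomial.map_dvd _ (Ideal.mem_span_singleton.mp hmf)) hunit)
  have hspan := IsLocalization.isPrime_of_isPrime_disjoint (M.map C) A[X] (Ideal.span {f})
    (Ideal.isPrime_span_singleton_of_prime hf) hdisj
  rw [← Ideal.span_singleton_prime (hmonic.map _).ne_zero]
  simpa [Ideal.map_span] using hspan

theorem prime_cyclotomic_of_isLocalization_int (M : Submonoid ℤ) (A : Type*) [CommRing A]
    [Nontrivial A] [Algebra ℤ A] [IsLocalization M A] {d : ℕ} (hd : 0 < d) :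
    Prime (cyclotomic d A) := by
  rw [← map_cyclotomic d (algebraMap ℤ A)]
  exact prime_map_of_isLocalization M (cyclotomic.monic d ℤ) (cyclotomic.irreducible hd).prime

theorem isSemiperfectRing_adjoinRoot_X_pow_sub_one_iff {A K : Type*} [CommRing A] [IsLocalRing A]
    [Field K] {φ : A →+* K} (hφ : Function.Surjective φ) {n : ℕ} (hn : 0 < n)
    (hunit : IsUnit (n : A)) (hprime : ∀ d, d ∣ n → Prime (cyclotomic d A)) :
    IsSemiperfectRing (AdjoinRoot (X ^ n - 1 : A[X])) ↔
      ∀ d, d ∣ n → Irreducible (cyclotomic d K) := by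
  have hprod : ∏ d : n.divisors, cyclotomic d A = X ^ n - 1 := by
    rw [Finset.prod_coe_sort n.divisors (cyclotomic · A), prod_cyclotomic_eq_X_pow_sub_one hn]
  have hsep : (∏ d : n.divisors, cyclotomic d A).Separable := by
    rw [hprod]
    simpa only [Units.val_one, map_one] using separable_X_pow_sub_C_unit (1 : Aˣ) hunit
  rw [← hprod, isSemiperfectRing_adjoinRoot_prod_iff hφ (fun d : n.divisors ↦ cyclotomic.monic d A)
    (fun d ↦ hprime d (Nat.dvd_of_mem_divisors d.2)) hsep]
  simp only [map_cyclotomic, Subtype.forall, Nat.mem_divisors, and_iff_left hn.ne']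

end Cyclotomic

section GroupAlgebra

variable (A : Type*) [CommRing A] (G : Type*) [CommGroup G] [Finite G]

variable {G} in
/-- The `A`-algebra map `A[X]/(X ^ |G| - 1) → A[G]` sending the class of `X` to `g`. -/
noncomputable def adjoinRootToMonoidAlgebra (g : G) :
    AdjoinRoot (X ^ Nat.card G - 1 : A[X]) →ₐ[A] MonoidAlgebra A G :=
  AdjoinRoot.liftAlgHom _ (Algebra.ofId _ _) (MonoidAlgebra.of A G g) (by
    simp [-MonoidAlgebra.of_apply, ← map_pow])

variable {G} in
lemma adjoinRootToMonoidAlgebra_surjective {g : G} (hg : ∀ x, x ∈ Subgroup.zpowers g) :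
    Function.Surjective (adjoinRootToMonoidAlgebra A g) := by
  intro x
  rw [← AlgHom.mem_range]
  induction x using MonoidAlgebra.induction_on with
  | of x =>
    obtain ⟨k, rfl⟩ := mem_powers_iff_mem_zpowers.mpr (hg x)
    exact ⟨AdjoinRoot.root _ ^ k, by simp [adjoinRootToMonoidAlgebra, -MonoidAlgebra.of_apply]⟩
  | add y z hy hz => exact add_mem hy hz
  | smul r y hy => exact Subalgebra.smul_mem _ hy r

theorem nonempty_algEquiv_adjoinRoot_monoidAlgebra [Nontrivial A] [IsCyclic G] :
    Nonempty (AdjoinRoot (X ^ Nat.card G - 1 : A[X]) ≃ₐ[A] MonoidAlgebra A G) := by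
  obtain ⟨g, hg⟩ := IsCyclic.exists_generator (α := G)
  have hmonic : (X ^ Nat.card G - 1 : A[X]).Monic := monic_X_pow_sub_C 1 Nat.card_pos.ne'
  have := hmonic.finite_adjoinRoot
  have := Module.Free.of_basis (AdjoinRoot.powerBasis' hmonic).basis
  have hfinrank : Module.finrank A (MonoidAlgebra A G) =
      Module.finrank A (AdjoinRoot (X ^ Nat.card G - 1 : A[X])) := by
    rw [(AdjoinRoot.powerBasis' hmonic).finrank, AdjoinRoot.powerBasis'_dim, ← C_1,
      natDegree_X_pow_sub_C, Module.finrank_eq_nat_card_basis (MonoidAlgebra.basis G A)]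
  -- A surjection between free modules of the same finite rank is bijective.
  let e := LinearEquiv.ofFinrankEq _ _ hfinrank
  have hbij := OrzechProperty.bijective_of_surjective_endomorphism
    (e.toLinearMap.comp (adjoinRootToMonoidAlgebra A g).toLinearMap)
    (e.surjective.comp (adjoinRootToMonoidAlgebra_surjective A hg))
  exact ⟨AlgEquiv.ofBijective (adjoinRootToMonoidAlgebra A g)
    ((Function.Bijective.of_comp_iff' e.bijective _).mp hbij)⟩

variable {A G}

theorem isSemiperfectRing_zloc_cyclic_iff_orderOf_general [IsLocalRing A]
    [Finite (ResidueField A)] [IsCyclic G] (hunit : IsUnit (Nat.card G : A))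
    (hprime : ∀ d, d ∣ Nat.card G → Prime (cyclotomic d A)) :
    IsSemiperfectRing (MonoidAlgebra A G) ↔
      ∀ d, d ∣ Nat.card G → orderOf (Nat.card (ResidueField A) : ZMod d) = d.totient := by
  obtain ⟨e⟩ := nonempty_algEquiv_adjoinRoot_monoidAlgebra A G
  rw [← isSemiperfectRing_congr e.toRingEquiv,
    isSemiperfectRing_adjoinRoot_X_pow_sub_one_iff residue_surjective Nat.card_pos hunit hprime]
  refine forall₂_congr fun d hd ↦ irreducible_cyclotomic_iff_orderOf_card ?_
  have hd_unit : IsUnit (d : A) := isUnit_of_dvd_unit (Nat.cast_dvd_cast hd) hunit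
  simpa using (hd_unit.map (residue A)).ne_zero

end GroupAlgebra

section ZLoc

variable (p : ℕ) [Fact p.Prime]

lemma card_residueField_zloc : Nat.card (ResidueField (ZLoc p)) = p := by
  calc Nat.card (ResidueField (ZLoc p))
      = Nat.card (ℤ ⧸ Ideal.span {(p : ℤ)}) := (Nat.card_eq_of_bijective _
        (Ideal.bijective_algebraMap_quotient_residueField (Ideal.span {(p : ℤ)}))).symm
    _ = p := Int.card_ideal_quot p

instance finite_residueField_zloc : Finite (ResidueField (ZLoc p)) :=
  Nat.finite_of_card_ne_zero (by rw [card_residueField_zloc]; exact (Fact.out : p.Prime).ne_zero)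

variable {p}

lemma isUnit_natCast_zloc_iff {n : ℕ} : IsUnit (n : ZLoc p) ↔ ¬p ∣ n := by
  rw [← map_natCast (algebraMap ℤ (ZLoc p)),
    IsLocalization.AtPrime.isUnit_to_map_iff _ (Ideal.span {(p : ℤ)}),
    Ideal.mem_primeCompl_iff, Ideal.mem_span_singleton, Int.natCast_dvd_natCast]

lemma prime_cyclotomic_zloc {d : ℕ} (hd : 0 < d) : Prime (cyclotomic d (ZLoc p)) :=
  prime_cyclotomic_of_isLocalization_int (Ideal.span {(p : ℤ)}).primeCompl (ZLoc p) hd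

end ZLoc

/-- Let `p` be a prime and `n > 0` with `p ∤ n`, and let `Cₙ` be the cyclic group of order
`n`. Then `ℤ_(p)Cₙ` is semiperfect if and only if for each divisor `d` of `n` the
multiplicative order of `p` modulo `d` equals `φ(d)`, i.e. `p` is a primitive root mod `d`. -/
theorem isSemiperfectRing_zloc_cyclic_iff_orderOf
    (p n : ℕ) [Fact p.Prime] (hn : 0 < n) (hpn : ¬ p ∣ n) :
    IsSemiperfectRing (MonoidAlgebra (ZLoc p) (Multiplicative (ZMod n))) ↔
      ∀ d : ℕ, d ∣ n → orderOf (p : ZMod d) = Nat.totient d := by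
  have hcard : Nat.card (Multiplicative (ZMod n)) = n := Nat.card_zmod n
  have : NeZero n := ⟨hn.ne'⟩
  simpa only [hcard, card_residueField_zloc] using
    isSemiperfectRing_zloc_cyclic_iff_orderOf_general (A := ZLoc p) (G := Multiplicative (ZMod n))
      (by rwa [hcard, isUnit_natCast_zloc_iff])
      fun d hd ↦ prime_cyclotomic_zloc (Nat.pos_of_dvd_of_pos (hcard ▸ hd) hn)
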